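/- (One-step expected descent of over-the-air federated policy gradient.) In the over-the-air federated PG model, if 0 < α ≤ 1/(m_h·L), then for every k ≥ 0, E[J(θ^{k+1})] − E[J(θ^k)] ≤ (α·((M−1)·σ_h² − M·(N+1)·m_h²)/(2·M·N·m_h))·E[‖∇J(θ^k)‖²] + α·σ̄²/(2·m_h·N²) + α·σ_h²·V²/(2·M·N·m_h). -/

import Mathlib

open MeasureTheory ProbabilityTheory Gradient

/-- The family `{h_i}_i ∪ {X_{i,m}}_{i,m} ∪ {n}` combined into a single family of random
variables with common codomain `ℝ × ℝ^d`; each member generates exactly the σ-algebra of the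
corresponding original random variable, so (conditional) mutual independence of this family is
equivalent to (conditional) mutual independence of the original family. -/
def otaFam {d N M : ℕ} {Ω : Type*}
    (h : Fin N → Ω → ℝ) (X : Fin N → Fin M → Ω → EuclideanSpace ℝ (Fin d))
    (n : Ω → EuclideanSpace ℝ (Fin d)) :
    Fin N ⊕ (Fin N × Fin M) ⊕ Unit → Ω → ℝ × EuclideanSpace ℝ (Fin d)
  | Sum.inl i => fun ω => (h i ω, 0)
  | Sum.inr (Sum.inl (i, m)) => fun ω => (0, X i m ω)
  | Sum.inr (Sum.inr _) => fun ω => (0, n ω)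

/-! Smoothness confines `J (θ - t v) - J θ + t ⟪∇ J θ, v⟫` to `± L t² ‖v‖² / 2`; besides the descent
inequality this propagates the integrability of `J` along the iterates. Under the regular
conditional law given the past, the gains, samples and noise of a round are still independent, and
the first two moments of the gains are constants. There the received signal `v` is a sum of pairwise
independent terms, one per agent and one for the noise, with mean `N m_h ∇ J θ`, and its second
moment is the squared norm of the mean plus the sum of the variances. Integrating over the past with
`t = α / N` gives the theorem, the stepsize condition turning `L t² / 2` into `α / (2 m_h N²)`.
-/

section Smoothness

variable {E : Type*} [NormedAddCommGroup E] [InnerProductSpace ℝ E] [CompleteSpace E]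
  {J : E → ℝ} {L : ℝ}

lemma abs_sub_sub_inner_gradient_le (hJ : Differentiable ℝ J)
    (hLip : ∀ x y, ‖∇ J x - ∇ J y‖ ≤ L * ‖x - y‖) (x y : E) :
    |J (x + y) - J x - inner ℝ (∇ J x) y| ≤ L / 2 * ‖y‖ ^ 2 := by
  let remainder : ℝ → ℝ := fun t => J (x + t • y) - J x - t * inner ℝ (∇ J x) y
  have hderiv (t : ℝ) :
      HasDerivAt remainder (inner ℝ (∇ J (x + t • y) - ∇ J x) y) t := by
    have hline : HasDerivAt (fun t : ℝ => x + t • y) y t := by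
      simpa using ((hasDerivAt_id t).smul_const y).const_add x
    have hJline := (hJ (x + t • y)).hasGradientAt.hasFDerivAt.comp_hasDerivAt t hline
    refine ((hJline.sub_const (J x)).sub
      ((hasDerivAt_id t).mul_const (inner ℝ (∇ J x) y))).congr_deriv ?_
    rw [InnerProductSpace.toDual_apply_apply, one_mul, inner_sub_left]
  have hbound_deriv (t : ℝ) : HasDerivAt (fun t => L / 2 * ‖y‖ ^ 2 * t ^ 2) (L * t * ‖y‖ ^ 2) t :=
    ((hasDerivAt_pow 2 t).const_mul (L / 2 * ‖y‖ ^ 2)).congr_deriv (by push_cast; ring)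
  have hle (t : ℝ) (ht : t ∈ Set.Ico (0 : ℝ) 1) :
      ‖inner ℝ (∇ J (x + t • y) - ∇ J x) y‖ ≤ L * t * ‖y‖ ^ 2 :=
    calc ‖inner ℝ (∇ J (x + t • y) - ∇ J x) y‖
        ≤ ‖∇ J (x + t • y) - ∇ J x‖ * ‖y‖ := norm_inner_le_norm _ _
      _ ≤ L * ‖x + t • y - x‖ * ‖y‖ := by gcongr; exact hLip _ _
      _ = L * t * ‖y‖ ^ 2 := by
        rw [add_sub_cancel_left, norm_smul, Real.norm_of_nonneg ht.1]; ring
  have := image_norm_le_of_norm_deriv_right_le_deriv_boundary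
    (fun t _ => (hderiv t).continuousAt.continuousWithinAt)
    (fun t _ => (hderiv t).hasDerivWithinAt) (by simp [remainder]) hbound_deriv hle
    (Set.right_mem_Icc.2 zero_le_one)
  simpa [remainder] using this

end Smoothness

section CondExp

variable {Ω E : Type*} {m mΩ : MeasurableSpace Ω} {μ : Measure Ω}
  [NormedAddCommGroup E] [InnerProductSpace ℝ E]

lemma integrable_inner_of_memLp_two {f g : Ω → E}
    (hf : MemLp f 2 μ) (hg : MemLp g 2 μ) : Integrable (fun ω => inner ℝ (f ω) (g ω)) μ :=
  (hf.norm.integrable_mul hg.norm).mono' (hf.1.inner hg.1)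
    (ae_of_all _ fun _ => norm_inner_le_norm _ _)

lemma integral_inner_of_condExp_eq_smul [CompleteSpace E] [IsFiniteMeasure μ] (hm : m ≤ mΩ)
    {g v : Ω → E} {c : ℝ} (hgm : AEStronglyMeasurable[m] g μ) (hg : MemLp g 2 μ)
    (hv : MemLp v 2 μ) (hcond : μ[v | m] =ᵐ[μ] fun ω => c • g ω) :
    ∫ ω, inner ℝ (g ω) (v ω) ∂μ = c * ∫ ω, ‖g ω‖ ^ 2 ∂μ := by
  have hpull : μ[fun ω => inner ℝ (g ω) (v ω) | m] =ᵐ[μ] fun ω => inner ℝ (g ω) (μ[v | m] ω) :=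
    condExp_bilin_of_aestronglyMeasurable_left (innerSL ℝ) hgm
      (integrable_inner_of_memLp_two hg hv) (hv.integrable one_le_two)
  rw [← integral_condExp hm, ← integral_const_mul]
  refine integral_congr_ae ?_
  filter_upwards [hpull, hcond] with ω hω hcω
  rw [hω, hcω, real_inner_smul_right, real_inner_self_eq_norm_sq]

end CondExp

section GradientStep

variable {Ω E : Type*} {m mΩ : MeasurableSpace Ω} {μ : Measure Ω}
  [NormedAddCommGroup E] [InnerProductSpace ℝ E] [CompleteSpace E] {J : E → ℝ} {L : ℝ}
  {θ v : Ω → E}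

lemma integrable_comp_sub_smul (hJ : Differentiable ℝ J)
    (hLip : ∀ x y, ‖∇ J x - ∇ J y‖ ≤ L * ‖x - y‖) (hθ : AEStronglyMeasurable θ μ)
    (hJθ : Integrable (fun ω => J (θ ω)) μ) (hg : MemLp (fun ω => ∇ J (θ ω)) 2 μ)
    (hv : MemLp v 2 μ) (t : ℝ) :
    Integrable (fun ω => J (θ ω - t • v ω)) μ := by
  have hu : MemLp (fun ω => -(t • v ω)) 2 μ := (hv.const_smul t).neg
  have hlin := hJθ.add (integrable_inner_of_memLp_two hg hu)
  have hrem : Integrable (fun ω => J (θ ω - t • v ω) - (J (θ ω) +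
      inner ℝ (∇ J (θ ω)) (-(t • v ω)))) μ := by
    refine (hu.integrable_norm_pow two_ne_zero |>.const_mul (L / 2)).mono'
      ((hJ.continuous.comp_aestronglyMeasurable (hθ.sub (hv.1.const_smul t))).sub hlin.1)
      (ae_of_all _ fun ω => ?_)
    rw [Real.norm_eq_abs, ← sub_sub, sub_eq_add_neg (θ ω)]
    exact abs_sub_sub_inner_gradient_le hJ hLip _ _
  refine (hrem.add hlin).congr (ae_of_all _ fun ω => ?_)
  simp only [Pi.add_apply, sub_add_cancel]

lemma integral_comp_sub_smul_sub_le [IsFiniteMeasure μ] (hm : m ≤ mΩ)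
    (hJ : Differentiable ℝ J) (hLip : ∀ x y, ‖∇ J x - ∇ J y‖ ≤ L * ‖x - y‖)
    (hθ : AEStronglyMeasurable θ μ) (hJθ : Integrable (fun ω => J (θ ω)) μ)
    (hgm : AEStronglyMeasurable[m] (fun ω => ∇ J (θ ω)) μ)
    (hg : MemLp (fun ω => ∇ J (θ ω)) 2 μ) (hv : MemLp v 2 μ) {c : ℝ}
    (hcond : μ[v | m] =ᵐ[μ] fun ω => c • ∇ J (θ ω)) (t : ℝ) :
    ∫ ω, J (θ ω - t • v ω) ∂μ - ∫ ω, J (θ ω) ∂μ ≤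
      -(t * c) * ∫ ω, ‖∇ J (θ ω)‖ ^ 2 ∂μ + L / 2 * t ^ 2 * ∫ ω, ‖v ω‖ ^ 2 ∂μ := by
  have hdesc (ω : Ω) : J (θ ω - t • v ω) - J (θ ω) ≤
      -t * inner ℝ (∇ J (θ ω)) (v ω) + L / 2 * t ^ 2 * ‖v ω‖ ^ 2 := by
    have := (abs_le.1 (abs_sub_sub_inner_gradient_le hJ hLip (θ ω) (-(t • v ω)))).2
    rw [inner_neg_right, real_inner_smul_right, norm_neg, norm_smul, mul_pow, ← sub_eq_add_neg,
      Real.norm_eq_abs, sq_abs] at this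
    linarith
  have hinner := (integrable_inner_of_memLp_two hg hv).const_mul (-t)
  have hsq := (hv.integrable_norm_pow two_ne_zero).const_mul (L / 2 * t ^ 2)
  have hnext := integrable_comp_sub_smul hJ hLip hθ hJθ hg hv t
  calc ∫ ω, J (θ ω - t • v ω) ∂μ - ∫ ω, J (θ ω) ∂μ
      = ∫ ω, (J (θ ω - t • v ω) - J (θ ω)) ∂μ := (integral_sub hnext hJθ).symm
    _ ≤ ∫ ω, (-t * inner ℝ (∇ J (θ ω)) (v ω) + L / 2 * t ^ 2 * ‖v ω‖ ^ 2) ∂μ :=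
      integral_mono (hnext.sub hJθ) (hinner.add hsq) hdesc
    _ = -(t * c) * ∫ ω, ‖∇ J (θ ω)‖ ^ 2 ∂μ + L / 2 * t ^ 2 * ∫ ω, ‖v ω‖ ^ 2 ∂μ := by
      rw [integral_add hinner hsq, integral_const_mul, integral_const_mul,
        integral_inner_of_condExp_eq_smul hm hgm hg hv hcond]
      ring

end GradientStep

lemma exists_countable_isPiSystem_generateFrom (β : Type*) [mβ : MeasurableSpace β]
    [MeasurableSpace.CountablyGenerated β] :
    ∃ C : Set (Set β),
      C.Countable ∧ IsPiSystem C ∧ Set.univ ∈ C ∧ mβ = MeasurableSpace.generateFrom C := by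
  set s := MeasurableSpace.natGeneratingSequence β
  refine ⟨piiUnionInter (fun n => {s n}) Set.univ, ?_,
    isPiSystem_piiUnionInter _ (fun n => IsPiSystem.singleton (s n)) _,
    ⟨∅, by simp, fun _ => ∅, by simp⟩, ?_⟩
  · refine (Set.countable_range fun t : Finset ℕ => ⋂ n ∈ t, s n).mono ?_
    rw [piiUnionInter_singleton_left]
    rintro _ ⟨t, -, rfl⟩
    exact ⟨t, rfl⟩
  · rw [generateFrom_piiUnionInter_singleton_left]
    convert (MeasurableSpace.generateFrom_natGeneratingSequence β).symm using 2
    ext; simp [s]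

section KernelIndep

variable {ι α Ω : Type*} [Finite ι] {β : ι → Type*} {mα : MeasurableSpace α}
  {mΩ : MeasurableSpace Ω} [mβ : ∀ i, MeasurableSpace (β i)]
  [∀ i, MeasurableSpace.CountablyGenerated (β i)] {κ : Kernel α Ω} {μ : Measure α}
  {f : ∀ i, Ω → β i}

lemma ae_iIndepFun_of_kernel_of_measurable (hf : ∀ i, Measurable (f i))
    (hind : Kernel.iIndepFun f κ μ) : ∀ᵐ a ∂μ, iIndepFun f (κ a) := by
  choose C hCcount hCpi hCuniv hCgen using fun i => exists_countable_isPiSystem_generateFrom (β i)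
  have (i : ι) : Countable (C i) := hCcount i
  -- Countably many product identities suffice, so their exceptional null sets can be united.
  have hprod : ∀ᵐ a ∂μ, ∀ (s : Finset ι) (c : ∀ i, C i),
      κ a (⋂ i ∈ s, f i ⁻¹' c i) = ∏ i ∈ s, κ a (f i ⁻¹' c i) := by
    simp only [ae_all_iff]
    intro s c
    refine (Kernel.iIndepFun_iff_measure_inter_preimage_eq_mul _ _).1 hind s fun i _ => ?_
    rw [hCgen i]
    exact MeasurableSpace.measurableSet_generateFrom (c i).2
  filter_upwards [hprod] with a ha
  rw [iIndepFun_iff_iIndep]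
  refine iIndepSets.iIndep (fun i => (hf i).comap_le) (fun i => Set.preimage (f i) '' C i)
    (fun i => ?_) (fun i => ?_) (iIndepSets_iff _ _ |>.2 fun s t ht => ?_)
  · exact (hCpi i).comap (f i)
  · rw [← MeasurableSpace.comap_generateFrom, ← hCgen i]
  · have (i : ι) : ∃ c : C i, i ∈ s → f i ⁻¹' c = t i := by
      by_cases hi : i ∈ s
      · obtain ⟨c, hc, hct⟩ := ht i hi
        exact ⟨⟨c, hc⟩, fun _ => hct⟩
      · exact ⟨⟨Set.univ, hCuniv i⟩, fun h => absurd h hi⟩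
    choose c hc using this
    rw [← Set.iInter₂_congr hc, ha s c]
    exact Finset.prod_congr rfl fun i hi => by rw [hc i hi]

lemma ae_iIndepFun_of_kernel (hf : ∀ i, AEMeasurable (f i) (κ ∘ₘ μ))
    (hind : Kernel.iIndepFun f κ μ) : ∀ᵐ a ∂μ, iIndepFun f (κ a) := by
  have hmk : ∀ᵐ a ∂μ, ∀ i, f i =ᵐ[κ a] (hf i).mk (f i) :=
    ae_all_iff.2 fun i => Measure.ae_ae_of_ae_comp (hf i).ae_eq_mk
  filter_upwards [hmk, ae_iIndepFun_of_kernel_of_measurable (fun i => (hf i).measurable_mk)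
    (hind.congr' (ae_all_iff.1 hmk))] with a hfa hinda
  exact hinda.congr fun i => (hfa i).symm

end KernelIndep

section SecondMoment

variable {Ω E : Type*} {mΩ : MeasurableSpace Ω} {ν : Measure Ω} [NormedAddCommGroup E]
  [InnerProductSpace ℝ E] [MeasurableSpace E] [BorelSpace E]

lemma integral_inner_of_indepFun [CompleteSpace E] {f g : Ω → E} (hfg : IndepFun f g ν)
    (hf : Integrable f ν) (hg : Integrable g ν) :
    ∫ ω, inner ℝ (f ω) (g ω) ∂ν = inner ℝ (∫ ω, f ω ∂ν) (∫ ω, g ω ∂ν) :=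
  hfg.integral_bilin hf hg (innerSL ℝ)

lemma integral_norm_sq_sum_of_pairwise_indepFun [CompleteSpace E] [IsFiniteMeasure ν] {ι : Type*}
    [Fintype ι] {X : ι → Ω → E} (hX : ∀ i, MemLp (X i) 2 ν)
    (hind : Pairwise fun i j => IndepFun (X i) (X j) ν) :
    ∫ ω, ‖∑ i, X i ω‖ ^ 2 ∂ν =
      ‖∑ i, ∫ ω, X i ω ∂ν‖ ^ 2 + ∑ i, (∫ ω, ‖X i ω‖ ^ 2 ∂ν - ‖∫ ω, X i ω ∂ν‖ ^ 2) := by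
  classical
  have hint (i : ι) : Integrable (X i) ν := (hX i).integrable one_le_two
  have hinner (i j : ι) : Integrable (fun ω => inner ℝ (X i ω) (X j ω)) ν :=
    integrable_inner_of_memLp_two (hX i) (hX j)
  have hcov (i j : ι) : ∫ ω, inner ℝ (X i ω) (X j ω) ∂ν =
      inner ℝ (∫ ω, X i ω ∂ν) (∫ ω, X j ω ∂ν) +
        if i = j then ∫ ω, ‖X i ω‖ ^ 2 ∂ν - ‖∫ ω, X i ω ∂ν‖ ^ 2 else 0 := by
    split_ifs with hij
    · subst hij
      simp only [real_inner_self_eq_norm_sq, add_sub_cancel]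
    · rw [integral_inner_of_indepFun (hind hij) (hint i) (hint j), add_zero]
  have hexpand (x : ι → E) : ‖∑ i, x i‖ ^ 2 = ∑ i, ∑ j, inner ℝ (x i) (x j) := by
    rw [← real_inner_self_eq_norm_sq, sum_inner]
    simp only [inner_sum]
  calc ∫ ω, ‖∑ i, X i ω‖ ^ 2 ∂ν
      = ∫ ω, ∑ i, ∑ j, inner ℝ (X i ω) (X j ω) ∂ν := by
        simp only [hexpand]
    _ = ∑ i, ∑ j, ∫ ω, inner ℝ (X i ω) (X j ω) ∂ν := by
        rw [integral_finsetSum _ fun i _ => integrable_finsetSum _ fun j _ => hinner i j]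
        exact Finset.sum_congr rfl fun i _ => integral_finsetSum _ fun j _ => hinner i j
    _ = ‖∑ i, ∫ ω, X i ω ∂ν‖ ^ 2 + ∑ i, (∫ ω, ‖X i ω‖ ^ 2 ∂ν - ‖∫ ω, X i ω ∂ν‖ ^ 2) := by
        simp only [hcov, Finset.sum_add_distrib, Finset.sum_ite_eq, Finset.mem_univ, if_true,
          hexpand]

lemma memLp_two_smul_of_indepFun {f : Ω → ℝ} {g : Ω → E} (hfg : IndepFun f g ν)
    (hf : MemLp f 2 ν) (hg : MemLp g 2 ν) : MemLp (fun ω => f ω • g ω) 2 ν := by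
  have hsq : IndepFun (fun ω => ‖f ω‖ ^ 2) (fun ω => ‖g ω‖ ^ 2) ν :=
    hfg.comp (φ := fun x => ‖x‖ ^ 2) (ψ := fun x => ‖x‖ ^ 2) (by fun_prop) (by fun_prop)
  refine (memLp_two_iff_integrable_sq_norm (hf.1.smul hg.1)).2 ?_
  refine (hsq.integrable_mul (hf.integrable_norm_pow two_ne_zero)
    (hg.integrable_norm_pow two_ne_zero)).congr (ae_of_all _ fun ω => ?_)
  simp only [Pi.mul_apply, Pi.smul_apply', norm_smul, mul_pow]

lemma integral_norm_sq_smul_of_indepFun {f : Ω → ℝ} {g : Ω → E} (hfg : IndepFun f g ν)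
    (hf : AEStronglyMeasurable f ν) (hg : AEStronglyMeasurable g ν) :
    ∫ ω, ‖f ω • g ω‖ ^ 2 ∂ν = (∫ ω, f ω ^ 2 ∂ν) * ∫ ω, ‖g ω‖ ^ 2 ∂ν := by
  simp only [norm_smul, mul_pow, Real.norm_eq_abs, sq_abs]
  exact (hfg.comp (φ := fun x => x ^ 2) (ψ := fun x => ‖x‖ ^ 2) (by fun_prop)
    (by fun_prop)).integral_fun_mul_eq_mul_integral (hf.pow 2) (hg.norm.pow 2)

end SecondMoment

/-- The average `(1/M) ∑ₘ Xₘ` of a mini-batch of `M` samples; it is `0` when `M = 0`. -/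
noncomputable def batchMean {Ω E : Type*} [AddCommGroup E] [Module ℝ E] {M : ℕ}
    (X : Fin M → Ω → E) : Ω → E :=
  fun ω => (1 / (M : ℝ)) • ∑ m, X m ω

section BatchMean

variable {Ω E : Type*} {mΩ : MeasurableSpace Ω} {ν : Measure Ω} [NormedAddCommGroup E]
  [InnerProductSpace ℝ E] {M : ℕ} {X : Fin M → Ω → E}

lemma memLp_batchMean {p : ENNReal} (hX : ∀ m, MemLp (X m) p ν) : MemLp (batchMean X) p ν :=
  (memLp_finsetSum _ fun m _ => hX m).const_smul _

lemma integral_batchMean (hM : 0 < M) (hX : ∀ m, Integrable (X m) ν) {g : E}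
    (hg : ∀ m, ∫ ω, X m ω ∂ν = g) : ∫ ω, batchMean X ω ∂ν = g := by
  simp only [batchMean]
  rw [integral_smul, integral_finsetSum _ fun m _ => hX m]
  simp only [hg, Finset.sum_const, Finset.card_univ, Fintype.card_fin, ← Nat.cast_smul_eq_nsmul ℝ]
  rw [smul_smul, one_div_mul_cancel (by positivity), one_smul]

lemma integral_norm_sq_batchMean_le [CompleteSpace E] [MeasurableSpace E] [BorelSpace E]
    [IsFiniteMeasure ν] (hM : 0 < M) (hX : ∀ m, MemLp (X m) 2 ν)
    (hind : Pairwise fun i j => IndepFun (X i) (X j) ν) {g : E} {C : ℝ}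
    (hg : ∀ m, ∫ ω, X m ω ∂ν = g) (hC : ∀ m, ∫ ω, ‖X m ω‖ ^ 2 ∂ν ≤ C) :
    ∫ ω, ‖batchMean X ω‖ ^ 2 ∂ν ≤ ‖g‖ ^ 2 + (C - ‖g‖ ^ 2) / M :=
  calc ∫ ω, ‖batchMean X ω‖ ^ 2 ∂ν
      = (1 / (M : ℝ)) ^ 2 * ∫ ω, ‖∑ m, X m ω‖ ^ 2 ∂ν := by
        simp only [batchMean, norm_smul, mul_pow, Real.norm_eq_abs, sq_abs, integral_const_mul]
    _ = (1 / (M : ℝ)) ^ 2 *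
          (‖(M : ℝ) • g‖ ^ 2 + ∑ m, (∫ ω, ‖X m ω‖ ^ 2 ∂ν - ‖g‖ ^ 2)) := by
        rw [integral_norm_sq_sum_of_pairwise_indepFun hX hind]
        simp only [hg, Finset.sum_const, Finset.card_univ, Fintype.card_fin,
          ← Nat.cast_smul_eq_nsmul ℝ]
    _ ≤ (1 / (M : ℝ)) ^ 2 * (‖(M : ℝ) • g‖ ^ 2 + ∑ _m : Fin M, (C - ‖g‖ ^ 2)) := by
        gcongr with m
        exact hC m
    _ = ‖g‖ ^ 2 + (C - ‖g‖ ^ 2) / M := by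
        simp only [norm_smul, mul_pow, Real.norm_natCast, Finset.sum_const, Finset.card_univ,
          Fintype.card_fin, nsmul_eq_mul]
        field_simp

end BatchMean

lemma condExp_comp_ae_eq_const_of_indep {Ω β F : Type*} {m mΩ : MeasurableSpace Ω}
    [mβ : MeasurableSpace β] [NormedAddCommGroup F] [NormedSpace ℝ F] [CompleteSpace F]
    {μ : Measure Ω} [IsProbabilityMeasure μ] (hm : m ≤ mΩ) {f : Ω → β} (hf : AEMeasurable f μ)
    (hind : Indep (mβ.comap f) m μ) {φ : β → F} (hφ : StronglyMeasurable φ)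
    {c : F} (hc : ∫ ω, φ (f ω) ∂μ = c) : μ[fun ω => φ (f ω) | m] =ᵐ[μ] fun _ => c := by
  have hmk := hf.ae_eq_mk
  -- Independence from `m` is independence from `id : Ω → (Ω, m)`, and independence of random
  -- variables, unlike `f ↦ mβ.comap f`, is stable under almost everywhere modification.
  have hind_mk : Indep (mβ.comap (hf.mk f)) m μ := by
    have hindFun : @IndepFun Ω β Ω mΩ mβ m f id μ :=
      (@IndepFun_iff_Indep Ω β Ω mΩ mβ m f id μ).2 (by rwa [MeasurableSpace.comap_id])
    have := (@IndepFun_iff_Indep Ω β Ω mΩ mβ m _ id μ).1 (hindFun.congr hmk ae_eq_rfl)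
    rwa [MeasurableSpace.comap_id] at this
  have hφmk : (fun ω => φ (f ω)) =ᵐ[μ] fun ω => φ (hf.mk f ω) := hmk.fun_comp φ
  rw [← hc, integral_congr_ae hφmk]
  exact (condExp_congr_ae hφmk).trans (condExp_indep_eq hf.measurable_mk.comap_le hm
    (hφ.comp_measurable (comap_measurable _)) hind_mk)

section CondExpKernel

variable {Ω : Type*} {m mΩ : MeasurableSpace Ω}

lemma lintegral_trim_le {μ : Measure Ω} (hm : m ≤ mΩ) (f : Ω → ENNReal) :
    ∫⁻ ω, f ω ∂μ.trim hm ≤ ∫⁻ ω, f ω ∂μ := by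
  obtain ⟨g, hg, hgf, hfg⟩ := exists_measurable_le_lintegral_eq (μ.trim hm) f
  rw [hfg, lintegral_trim hm hg]
  exact lintegral_mono hgf

variable [StandardBorelSpace Ω] {μ : Measure Ω} [IsFiniteMeasure μ] {F : Type*}
  [NormedAddCommGroup F]

lemma memLp_two_condExpKernel_ae {f : Ω → F} (hf : MemLp f 2 μ) :
    ∀ᵐ ω ∂μ, MemLp f 2 (condExpKernel μ m ω) := by
  filter_upwards [(hf.integrable one_le_two).condExpKernel_ae (m := m),
    (hf.integrable_norm_pow two_ne_zero).condExpKernel_ae (m := m)] with ω hω hω_sq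
  exact (memLp_two_iff_integrable_sq_norm hω.1).2 hω_sq

lemma integrable_of_condExpKernel_ae (hm : m ≤ mΩ) {f : Ω → F} {b : Ω → ℝ}
    (hf : AEStronglyMeasurable f μ) (hint : ∀ᵐ ω ∂μ, Integrable f (condExpKernel μ m ω))
    (hle : ∀ᵐ ω ∂μ, ∫ ω', ‖f ω'‖ ∂condExpKernel μ m ω ≤ b ω) (hb : Integrable b μ) :
    Integrable f μ := by
  refine ⟨hf, ?_⟩
  calc ∫⁻ ω, ‖f ω‖ₑ ∂μ
      = ∫⁻ ω, ‖f ω‖ₑ ∂(condExpKernel μ m ∘ₘ μ.trim hm) := by rw [condExpKernel_comp_trim]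
    _ ≤ ∫⁻ ω, ∫⁻ ω', ‖f ω'‖ₑ ∂condExpKernel μ m ω ∂μ :=
      (Measure.lintegral_bind_le _ _ _).trans (lintegral_trim_le hm _)
    _ ≤ ∫⁻ ω, ‖b ω‖ₑ ∂μ := by
      refine lintegral_mono_ae ?_
      filter_upwards [hint, hle] with ω hω hωb
      rw [← ofReal_integral_norm_eq_lintegral_enorm hω, ← ofReal_norm]
      exact ENNReal.ofReal_le_ofReal (hωb.trans (le_abs_self _))
    _ < ⊤ := hb.2

lemma integral_le_of_condExpKernel_ae (hm : m ≤ mΩ) {f b : Ω → ℝ} (hf : Integrable f μ)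
    (hle : ∀ᵐ ω ∂μ, ∫ ω', f ω' ∂condExpKernel μ m ω ≤ b ω) (hb : Integrable b μ) :
    ∫ ω, f ω ∂μ ≤ ∫ ω, b ω ∂μ := by
  rw [← integral_condExp hm]
  refine integral_mono_ae integrable_condExp hb ?_
  filter_upwards [condExp_ae_eq_integral_condExpKernel hm hf, hle] with ω hω hωb
  exact hω.trans_le hωb

lemma memLp_two_and_integral_norm_sq_le_of_condExpKernel_ae (hm : m ≤ mΩ) {f : Ω → F}
    {z b : Ω → ℝ} (hf : AEStronglyMeasurable f μ) (hz : Integrable z μ) (hb : Integrable b μ)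
    (hmem : ∀ᵐ ω ∂μ, MemLp f 2 (condExpKernel μ m ω))
    (hle : ∀ᵐ ω ∂μ, ∫ ω', ‖f ω'‖ ^ 2 ∂condExpKernel μ m ω ≤
      ∫ ω', z ω' ∂condExpKernel μ m ω + b ω) :
    MemLp f 2 μ ∧ ∫ ω, ‖f ω‖ ^ 2 ∂μ ≤ ∫ ω, z ω ∂μ + ∫ ω, b ω ∂μ := by
  have hbound : ∀ᵐ ω ∂μ, ∫ ω', ‖f ω'‖ ^ 2 ∂condExpKernel μ m ω ≤ (μ[z | m] + b) ω := by
    filter_upwards [hle, condExp_ae_eq_integral_condExpKernel hm hz] with ω hω hzω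
    rwa [Pi.add_apply, hzω]
  have hbound_int : Integrable (μ[z | m] + b) μ := integrable_condExp.add hb
  have hint : Integrable (fun ω => ‖f ω‖ ^ 2) μ :=
    integrable_of_condExpKernel_ae hm (hf.norm.pow 2)
      (hmem.mono fun ω hω => hω.integrable_norm_pow two_ne_zero)
      (by simpa only [norm_pow, norm_norm] using hbound) hbound_int
  refine ⟨(memLp_two_iff_integrable_sq_norm hf).2 hint, ?_⟩
  rw [← integral_condExp hm (f := z), ← integral_add' integrable_condExp hb]
  exact integral_le_of_condExpKernel_ae hm hint hbound hbound_int

end CondExpKernel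

section Signal

variable {Ω E : Type*} {N M : ℕ}

/-- The channel gains, the gradient samples and the receiver noise of one round as a single family
with common codomain `ℝ × E`; this is `otaFam` with values in an arbitrary space. -/
def signalFamily [Zero E] (h : Fin N → Ω → ℝ) (X : Fin N → Fin M → Ω → E) (n : Ω → E) :
    Fin N ⊕ (Fin N × Fin M) ⊕ Unit → Ω → ℝ × E
  | Sum.inl i => fun ω => (h i ω, 0)
  | Sum.inr (Sum.inl (i, m)) => fun ω => (0, X i m ω)
  | Sum.inr (Sum.inr _) => fun ω => (0, n ω)

lemma aemeasurable_signalFamily [Zero E] [MeasurableSpace E] {_ : MeasurableSpace Ω}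
    {ν : Measure Ω} {h : Fin N → Ω → ℝ} {X : Fin N → Fin M → Ω → E} {n : Ω → E}
    (hh : ∀ i, AEMeasurable (h i) ν) (hX : ∀ i m, AEMeasurable (X i m) ν)
    (hn : AEMeasurable n ν) : ∀ x, AEMeasurable (signalFamily h X n x) ν
  | Sum.inl i => (hh i).prodMk aemeasurable_const
  | Sum.inr (Sum.inl (i, m)) => aemeasurable_const.prodMk (hX i m)
  | Sum.inr (Sum.inr _) => aemeasurable_const.prodMk hn

/-- The indices of `signalFamily` that contribute to one summand of the received signal: those of
agent `i` for `some i`, that of the noise for `none`. -/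
def signalBlock : Option (Fin N) → Finset (Fin N ⊕ (Fin N × Fin M) ⊕ Unit)
  | some i => insert (Sum.inl i) (Finset.univ.image fun m => Sum.inr (Sum.inl (i, m)))
  | none => {Sum.inr (Sum.inr ())}

lemma pairwise_disjoint_signalBlock :
    Pairwise fun o o' : Option (Fin N) => Disjoint (signalBlock (M := M) o) (signalBlock o') := by
  rintro (_ | i) (_ | j) hne
  · exact absurd rfl hne
  · simp [signalBlock]
  · simp [signalBlock]
  · simp_all [signalBlock, Finset.disjoint_left, eq_comm]

variable [NormedAddCommGroup E] [InnerProductSpace ℝ E]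

/-- The summand of the received signal due to agent `i` (for `some i`) or to the noise
(for `none`). -/
noncomputable def signalPart (h : Fin N → Ω → ℝ) (X : Fin N → Fin M → Ω → E) (n : Ω → E) :
    Option (Fin N) → Ω → E
  | some i => fun ω => h i ω • batchMean (X i) ω
  | none => n

/-- The over-the-air aggregate `v = ∑ᵢ hᵢ · (1/M) ∑ₘ X_{i,m} + n` that drives the iteration. -/
noncomputable def receivedSignal (h : Fin N → Ω → ℝ) (X : Fin N → Fin M → Ω → E) (n : Ω → E) :
    Ω → E :=
  fun ω => (∑ i, h i ω • batchMean (X i) ω) + n ω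

lemma receivedSignal_eq_sum_signalPart (h : Fin N → Ω → ℝ) (X : Fin N → Fin M → Ω → E)
    (n : Ω → E) : receivedSignal h X n = fun ω => ∑ o, signalPart h X n o ω := by
  funext ω
  rw [Fintype.sum_option, add_comm]
  rfl

lemma aestronglyMeasurable_receivedSignal {_ : MeasurableSpace Ω} {μ : Measure Ω}
    {h : Fin N → Ω → ℝ} {X : Fin N → Fin M → Ω → E} {n : Ω → E}
    (hh : ∀ i, AEStronglyMeasurable (h i) μ)
    (hX : ∀ i j, AEStronglyMeasurable (X i j) μ) (hn : AEStronglyMeasurable n μ) :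
    AEStronglyMeasurable (receivedSignal h X n) μ :=
  (Finset.aestronglyMeasurable_fun_sum _ fun i _ => (hh i).smul
    ((Finset.aestronglyMeasurable_fun_sum _ fun j _ => hX i j).const_smul _)).add hn

variable [MeasurableSpace E]

lemma exists_measurable_signalPart_eq [BorelSpace E] [SecondCountableTopology E]
    (h : Fin N → Ω → ℝ) (X : Fin N → Fin M → Ω → E) (n : Ω → E) (o : Option (Fin N)) :
    ∃ φ : (signalBlock (M := M) o → ℝ × E) → E, Measurable φ ∧
      signalPart h X n o = fun ω => φ fun x => signalFamily h X n x ω := by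
  cases o with
  | none => exact ⟨fun z => (z ⟨Sum.inr (Sum.inr ()), by simp [signalBlock]⟩).2, by fun_prop, rfl⟩
  | some i =>
    exact ⟨fun z => (z ⟨Sum.inl i, by simp [signalBlock]⟩).1 • ((1 / (M : ℝ)) •
      ∑ m, (z ⟨Sum.inr (Sum.inl (i, m)), by simp [signalBlock]⟩).2), by fun_prop, rfl⟩

variable {mΩ : MeasurableSpace Ω}

/-- The law of one round of communication under a probability measure `ν`: mutually independent
square-integrable gains with mean `a` and second moment `σ`, samples with mean `g` and second moment
at most `C`, and centred noise. In the iteration `ν` is the conditional law given the past and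
`g` is the gradient at the current iterate. -/
structure IsOverTheAirRound (ν : Measure Ω) (h : Fin N → Ω → ℝ) (X : Fin N → Fin M → Ω → E)
    (n : Ω → E) (a σ C : ℝ) (g : E) : Prop where
  iIndepFun : iIndepFun (signalFamily h X n) ν
  memLp_gain : ∀ i, MemLp (h i) 2 ν
  memLp_sample : ∀ i m, MemLp (X i m) 2 ν
  memLp_noise : MemLp n 2 ν
  integral_gain : ∀ i, ∫ ω, h i ω ∂ν = a
  integral_gain_sq : ∀ i, ∫ ω, h i ω ^ 2 ∂ν = σ
  integral_sample : ∀ i m, ∫ ω, X i m ω ∂ν = g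
  integral_norm_sq_sample_le : ∀ i m, ∫ ω, ‖X i m ω‖ ^ 2 ∂ν ≤ C
  integral_noise : ∫ ω, n ω ∂ν = 0

namespace IsOverTheAirRound

variable {ν : Measure Ω} {h : Fin N → Ω → ℝ} {X : Fin N → Fin M → Ω → E} {n : Ω → E}
  {a σ C : ℝ} {g : E}

lemma pairwise_indepFun_sample (hr : IsOverTheAirRound ν h X n a σ C g) (i : Fin N) :
    Pairwise fun m m' => IndepFun (X i m) (X i m') ν := fun m m' hne =>
  (hr.iIndepFun.indepFun (i := Sum.inr (Sum.inl (i, m))) (j := Sum.inr (Sum.inl (i, m')))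
    (by simpa using hne)).comp measurable_snd measurable_snd

variable [BorelSpace E]

lemma aemeasurable_signalFamily (hr : IsOverTheAirRound ν h X n a σ C g)
    (x : Fin N ⊕ (Fin N × Fin M) ⊕ Unit) : AEMeasurable (signalFamily h X n x) ν :=
  _root_.aemeasurable_signalFamily (fun i => (hr.memLp_gain i).1.aemeasurable)
    (fun i m => (hr.memLp_sample i m).1.aemeasurable) hr.memLp_noise.1.aemeasurable x

variable [SecondCountableTopology E]

lemma indepFun_gain_batchMean (hr : IsOverTheAirRound ν h X n a σ C g) (i : Fin N) :
    IndepFun (h i) (batchMean (X i)) ν := by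
  let samples := Finset.univ.image fun m : Fin M =>
    (Sum.inr (Sum.inl (i, m)) : Fin N ⊕ (Fin N × Fin M) ⊕ Unit)
  have hdisj : Disjoint {Sum.inl i} samples := by simp [samples]
  exact (hr.iIndepFun.indepFun_finset₀ {Sum.inl i} samples hdisj hr.aemeasurable_signalFamily).comp
    (φ := fun z => (z ⟨Sum.inl i, Finset.mem_singleton_self _⟩).1)
    (ψ := fun z => (1 / (M : ℝ)) • ∑ m, (z ⟨Sum.inr (Sum.inl (i, m)),
      Finset.mem_image_of_mem _ (Finset.mem_univ m)⟩).2)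
    (by fun_prop) (by fun_prop)

lemma pairwise_indepFun_signalPart (hr : IsOverTheAirRound ν h X n a σ C g) :
    Pairwise fun o o' => IndepFun (signalPart h X n o) (signalPart h X n o') ν := by
  intro o o' hne
  obtain ⟨φ, hφ, hpart⟩ := exists_measurable_signalPart_eq h X n o
  obtain ⟨ψ, hψ, hpart'⟩ := exists_measurable_signalPart_eq h X n o'
  rw [hpart, hpart']
  exact (hr.iIndepFun.indepFun_finset₀ _ _ (pairwise_disjoint_signalBlock hne)
    hr.aemeasurable_signalFamily).comp hφ hψ

lemma memLp_signalPart (hr : IsOverTheAirRound ν h X n a σ C g) :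
    ∀ o, MemLp (signalPart h X n o) 2 ν
  | none => hr.memLp_noise
  | some i => memLp_two_smul_of_indepFun (hr.indepFun_gain_batchMean i) (hr.memLp_gain i)
      (memLp_batchMean (hr.memLp_sample i))

lemma memLp_receivedSignal (hr : IsOverTheAirRound ν h X n a σ C g) :
    MemLp (receivedSignal h X n) 2 ν := by
  rw [receivedSignal_eq_sum_signalPart]
  exact memLp_finsetSum _ fun o _ => hr.memLp_signalPart o

lemma integral_signalPart_some (hr : IsOverTheAirRound ν h X n a σ C g) (hM : 0 < M) (i : Fin N) :
    ∫ ω, signalPart h X n (some i) ω ∂ν = a • g := by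
  have := hr.iIndepFun.isProbabilityMeasure
  simp only [signalPart]
  rw [(hr.indepFun_gain_batchMean i).integral_fun_smul_eq_smul_integral (hr.memLp_gain i).1
      (memLp_batchMean (hr.memLp_sample i)).1, hr.integral_gain, integral_batchMean hM
      (fun m => (hr.memLp_sample i m).integrable one_le_two) (hr.integral_sample i)]

lemma integral_receivedSignal (hr : IsOverTheAirRound ν h X n a σ C g) (hM : 0 < M) :
    ∫ ω, receivedSignal h X n ω ∂ν = (N * a) • g := by
  have := hr.iIndepFun.isProbabilityMeasure
  rw [receivedSignal_eq_sum_signalPart, integral_finsetSum _ fun o _ =>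
    (hr.memLp_signalPart o).integrable one_le_two, Fintype.sum_option]
  simp only [hr.integral_signalPart_some hM, Finset.sum_const, Finset.card_univ, Fintype.card_fin,
    ← Nat.cast_smul_eq_nsmul ℝ, smul_smul]
  simp only [signalPart, hr.integral_noise, zero_add]

variable [CompleteSpace E]

lemma integral_norm_sq_signalPart_some_le (hr : IsOverTheAirRound ν h X n a σ C g) (hM : 0 < M)
    (i : Fin N) :
    ∫ ω, ‖signalPart h X n (some i) ω‖ ^ 2 ∂ν ≤ σ * (‖g‖ ^ 2 + (C - ‖g‖ ^ 2) / M) := by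
  have := hr.iIndepFun.isProbabilityMeasure
  have hσ : 0 ≤ σ := hr.integral_gain_sq i ▸ integral_nonneg fun ω => sq_nonneg _
  simp only [signalPart]
  rw [integral_norm_sq_smul_of_indepFun (hr.indepFun_gain_batchMean i) (hr.memLp_gain i).1
    (memLp_batchMean (hr.memLp_sample i)).1, hr.integral_gain_sq]
  exact mul_le_mul_of_nonneg_left (integral_norm_sq_batchMean_le hM (hr.memLp_sample i)
    (hr.pairwise_indepFun_sample i) (hr.integral_sample i) (hr.integral_norm_sq_sample_le i)) hσ

lemma integral_norm_sq_receivedSignal_le (hr : IsOverTheAirRound ν h X n a σ C g) (hM : 0 < M) :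
    ∫ ω, ‖receivedSignal h X n ω‖ ^ 2 ∂ν ≤ ∫ ω, ‖n ω‖ ^ 2 ∂ν + N * σ * C / M +
      (N * σ * (M - 1) / M + N * (N - 1) * a ^ 2) * ‖g‖ ^ 2 := by
  have := hr.iIndepFun.isProbabilityMeasure
  have hnoise : ∫ ω, signalPart h X n none ω ∂ν = 0 := hr.integral_noise
  rw [receivedSignal_eq_sum_signalPart, integral_norm_sq_sum_of_pairwise_indepFun
    hr.memLp_signalPart hr.pairwise_indepFun_signalPart]
  simp only [Fintype.sum_option, hr.integral_signalPart_some hM, hnoise]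
  calc ‖0 + ∑ _i : Fin N, a • g‖ ^ 2 + (∫ ω, ‖n ω‖ ^ 2 ∂ν - ‖(0 : E)‖ ^ 2 +
        ∑ i, (∫ ω, ‖signalPart h X n (some i) ω‖ ^ 2 ∂ν - ‖a • g‖ ^ 2))
      ≤ ‖0 + ∑ _i : Fin N, a • g‖ ^ 2 + (∫ ω, ‖n ω‖ ^ 2 ∂ν - ‖(0 : E)‖ ^ 2 +
        ∑ _i : Fin N, (σ * (‖g‖ ^ 2 + (C - ‖g‖ ^ 2) / M) - ‖a • g‖ ^ 2)) := by
        gcongr with i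
        exact hr.integral_norm_sq_signalPart_some_le hM i
    _ = ∫ ω, ‖n ω‖ ^ 2 ∂ν + N * σ * C / M +
        (N * σ * (M - 1) / M + N * (N - 1) * a ^ 2) * ‖g‖ ^ 2 := by
        simp only [Finset.sum_const, Finset.card_univ, Fintype.card_fin, zero_add, norm_zero,
          ← Nat.cast_smul_eq_nsmul ℝ, norm_smul, mul_pow, Real.norm_eq_abs, sq_abs, smul_eq_mul]
        field_simp
        ring

end IsOverTheAirRound

end Signal

section ConditionalRound

variable {Ω E : Type*} {N M : ℕ} {m mΩ : MeasurableSpace Ω} [StandardBorelSpace Ω]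
  {μ : Measure Ω} [NormedAddCommGroup E] [InnerProductSpace ℝ E] [CompleteSpace E]
  [MeasurableSpace E] [BorelSpace E] [SecondCountableTopology E]
  {h : Fin N → Ω → ℝ} {X : Fin N → Fin M → Ω → E} {n : Ω → E} {a σ C : ℝ} {g : Ω → E}

lemma isOverTheAirRound_condExpKernel_ae [IsFiniteMeasure μ] (hm : m ≤ mΩ)
    (hind : iCondIndepFun m hm (signalFamily h X n) μ)
    (hh : ∀ i, MemLp (h i) 2 μ) (hX : ∀ i j, MemLp (X i j) 2 μ) (hn : MemLp n 2 μ)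
    (hEh : ∀ i, μ[h i | m] =ᵐ[μ] fun _ => a)
    (hEh2 : ∀ i, μ[fun ω => h i ω ^ 2 | m] =ᵐ[μ] fun _ => σ)
    (hEX : ∀ i j, μ[X i j | m] =ᵐ[μ] g)
    (hEX2 : ∀ i j, ∀ᵐ ω ∂μ, μ[fun ω' => ‖X i j ω'‖ ^ 2 | m] ω ≤ C)
    (hEn : μ[n | m] =ᵐ[μ] fun _ => 0) :
    ∀ᵐ ω ∂μ, IsOverTheAirRound (condExpKernel μ m ω) h X n a σ C (g ω) := by
  have hindep : ∀ᵐ ω ∂μ, iIndepFun (signalFamily h X n) (condExpKernel μ m ω) := by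
    refine ae_of_ae_trim hm (ae_iIndepFun_of_kernel (fun x => ?_) hind)
    rw [condExpKernel_comp_trim hm]
    exact aemeasurable_signalFamily (fun i => (hh i).1.aemeasurable)
      (fun i j => (hX i j).1.aemeasurable) hn.1.aemeasurable x
  filter_upwards [hindep,
    ae_all_iff.2 fun i => memLp_two_condExpKernel_ae (m := m) (hh i),
    ae_all_iff.2 fun i => ae_all_iff.2 fun j => memLp_two_condExpKernel_ae (m := m) (hX i j),
    memLp_two_condExpKernel_ae (m := m) hn,
    ae_all_iff.2 fun i => (condExp_ae_eq_integral_condExpKernel hm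
      ((hh i).integrable one_le_two)).symm.trans (hEh i),
    ae_all_iff.2 fun i => (condExp_ae_eq_integral_condExpKernel hm
      (hh i).integrable_sq).symm.trans (hEh2 i),
    ae_all_iff.2 fun i => ae_all_iff.2 fun j => (condExp_ae_eq_integral_condExpKernel hm
      ((hX i j).integrable one_le_two)).symm.trans (hEX i j),
    ae_all_iff.2 fun i => ae_all_iff.2 fun j => (condExp_ae_eq_integral_condExpKernel hm
      ((hX i j).integrable_norm_pow two_ne_zero)).symm.trans_le (hEX2 i j),
    (condExp_ae_eq_integral_condExpKernel hm (hn.integrable one_le_two)).symm.trans hEn]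
    with ω hωind hωh hωX hωn hωEh hωEh2 hωEX hωEX2 hωEn
  exact ⟨hωind, hωh, hωX, hωn, hωEh, hωEh2, hωEX, hωEX2, hωEn⟩

lemma condExp_receivedSignal_ae_eq [IsFiniteMeasure μ] (hm : m ≤ mΩ) (hM : 0 < M)
    (hround : ∀ᵐ ω ∂μ, IsOverTheAirRound (condExpKernel μ m ω) h X n a σ C (g ω))
    (hv : Integrable (receivedSignal h X n) μ) :
    μ[receivedSignal h X n | m] =ᵐ[μ] fun ω => (N * a) • g ω := by
  filter_upwards [condExp_ae_eq_integral_condExpKernel hm hv, hround] with ω hω hr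
  rw [hω, hr.integral_receivedSignal hM]

lemma memLp_receivedSignal_and_integral_norm_sq_le [IsProbabilityMeasure μ] (hm : m ≤ mΩ)
    (hM : 0 < M) (hround : ∀ᵐ ω ∂μ, IsOverTheAirRound (condExpKernel μ m ω) h X n a σ C (g ω))
    (hv : AEStronglyMeasurable (receivedSignal h X n) μ) (hn : MemLp n 2 μ) (hg : MemLp g 2 μ) :
    MemLp (receivedSignal h X n) 2 μ ∧
      ∫ ω, ‖receivedSignal h X n ω‖ ^ 2 ∂μ ≤ ∫ ω, ‖n ω‖ ^ 2 ∂μ + (N * σ * C / M +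
        (N * σ * (M - 1) / M + N * (N - 1) * a ^ 2) * ∫ ω, ‖g ω‖ ^ 2 ∂μ) := by
  have hgsq := (hg.integrable_norm_pow two_ne_zero).const_mul
    (N * σ * (M - 1) / M + N * (N - 1) * a ^ 2)
  convert memLp_two_and_integral_norm_sq_le_of_condExpKernel_ae hm hv
    (hn.integrable_norm_pow two_ne_zero) ((integrable_const (N * σ * C / M)).add hgsq)
    (hround.mono fun ω hr => hr.memLp_receivedSignal)
    (hround.mono fun ω hr => (hr.integral_norm_sq_receivedSignal_le hM).trans_eq
      (add_assoc _ _ _)) using 3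
  rw [integral_add' (integrable_const _) hgsq, integral_const, probReal_univ, one_smul,
    integral_const_mul]

end ConditionalRound

lemma half_mul_div_sq_le {a α L : ℝ} (ha : 0 < a) (hα : 0 ≤ α) (hstep : α * (a * L) ≤ 1)
    (N : ℝ) :
    L / 2 * (α / N) ^ 2 ≤ α / (2 * a * N ^ 2) :=
  calc L / 2 * (α / N) ^ 2 = α * (a * L) * (α / (2 * a * N ^ 2)) := by field_simp
    _ ≤ 1 * (α / (2 * a * N ^ 2)) := by gcongr
    _ = α / (2 * a * N ^ 2) := one_mul _

section Descent

variable {Ω E : Type*} {N M : ℕ} {m mΩ : MeasurableSpace Ω} [StandardBorelSpace Ω]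
  {μ : Measure Ω} [IsProbabilityMeasure μ] [NormedAddCommGroup E] [InnerProductSpace ℝ E]
  [CompleteSpace E] [MeasurableSpace E] [BorelSpace E] [SecondCountableTopology E]
  {h : Fin N → Ω → ℝ} {X : Fin N → Fin M → Ω → E} {n : Ω → E} {a σ C α L : ℝ}
  {J : E → ℝ} {θ : Ω → E}

lemma integral_comp_sub_smul_receivedSignal_sub_le (hm : m ≤ mΩ) (hN : 0 < N) (hM : 0 < M)
    (ha : 0 < a) (hα : 0 ≤ α) (hstep : α * (a * L) ≤ 1)
    (hJ : Differentiable ℝ J) (hLip : ∀ x y, ‖∇ J x - ∇ J y‖ ≤ L * ‖x - y‖)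
    (hround : ∀ᵐ ω ∂μ, IsOverTheAirRound (condExpKernel μ m ω) h X n a σ C (∇ J (θ ω)))
    (hv : AEStronglyMeasurable (receivedSignal h X n) μ) (hn : MemLp n 2 μ)
    (hθ : AEStronglyMeasurable θ μ) (hJθ : Integrable (fun ω => J (θ ω)) μ)
    (hgm : AEStronglyMeasurable[m] (fun ω => ∇ J (θ ω)) μ)
    (hg : MemLp (fun ω => ∇ J (θ ω)) 2 μ) :
    ∫ ω, J (θ ω - (α / N) • receivedSignal h X n ω) ∂μ - ∫ ω, J (θ ω) ∂μ ≤
      α * ((M - 1) * σ - M * (N + 1) * a ^ 2) / (2 * M * N * a) * ∫ ω, ‖∇ J (θ ω)‖ ^ 2 ∂μ +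
        α * (∫ ω, ‖n ω‖ ^ 2 ∂μ) / (2 * a * N ^ 2) + α * σ * C / (2 * M * N * a) := by
  obtain ⟨hv2, hv2_le⟩ := memLp_receivedSignal_and_integral_norm_sq_le hm hM hround hv hn hg
  have hcond := condExp_receivedSignal_ae_eq hm hM hround (hv2.integrable one_le_two)
  set G := ∫ ω, ‖∇ J (θ ω)‖ ^ 2 ∂μ
  set S := ∫ ω, ‖n ω‖ ^ 2 ∂μ
  calc ∫ ω, J (θ ω - (α / N) • receivedSignal h X n ω) ∂μ - ∫ ω, J (θ ω) ∂μ
      ≤ -(α / N * (N * a)) * G + L / 2 * (α / N) ^ 2 * ∫ ω, ‖receivedSignal h X n ω‖ ^ 2 ∂μ :=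
        integral_comp_sub_smul_sub_le hm hJ hLip hθ hJθ hgm hg hv2 hcond _
    _ ≤ -(α / N * (N * a)) * G +
          α / (2 * a * N ^ 2) * ∫ ω, ‖receivedSignal h X n ω‖ ^ 2 ∂μ := by
        gcongr
        exact half_mul_div_sq_le ha hα hstep N
    _ ≤ -(α / N * (N * a)) * G + α / (2 * a * N ^ 2) *
          (S + (N * σ * C / M + (N * σ * (M - 1) / M + N * (N - 1) * a ^ 2) * G)) := by
        gcongr
    _ = α * ((M - 1) * σ - M * (N + 1) * a ^ 2) / (2 * M * N * a) * G +
          α * S / (2 * a * N ^ 2) + α * σ * C / (2 * M * N * a) := by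
        field_simp
        ring

end Descent

theorem overTheAir_one_step_descent_general {Ω E : Type*} {N M : ℕ} (hN : 0 < N) (hM : 0 < M)
    [mΩ : MeasurableSpace Ω] [StandardBorelSpace Ω] (μ : Measure Ω) [IsProbabilityMeasure μ]
    [NormedAddCommGroup E] [InnerProductSpace ℝ E] [CompleteSpace E] [MeasurableSpace E]
    [BorelSpace E] [SecondCountableTopology E] {m_h σ_h2 C σbar2 α L : ℝ} (hm : 0 < m_h)
    (hα : 0 ≤ α) (hαL : α * (m_h * L) ≤ 1) {J : E → ℝ} (hJ : Differentiable ℝ J)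
    (hLip : ∀ x y, ‖∇ J x - ∇ J y‖ ≤ L * ‖x - y‖) (𝓕 : Filtration ℕ mΩ)
    {h : ℕ → Fin N → Ω → ℝ} {X : ℕ → Fin N → Fin M → Ω → E} {n θ : ℕ → Ω → E}
    (hθ0 : AEStronglyMeasurable (θ 0) μ) (hJ0 : Integrable (fun ω => J (θ 0 ω)) μ)
    (hθ : ∀ k, θ (k + 1) = fun ω => θ k ω - (α / N) • receivedSignal (h k) (X k) (n k) ω)
    (hh2 : ∀ k i, MemLp (h k i) 2 μ) (hX2 : ∀ k i j, MemLp (X k i j) 2 μ)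
    (hn2 : ∀ k, MemLp (n k) 2 μ)
    (hind : ∀ k, iCondIndepFun (𝓕 k) (𝓕.le k) (signalFamily (h k) (X k) (n k)) μ)
    (hEh : ∀ k i, μ[h k i | 𝓕 k] =ᵐ[μ] fun _ => m_h)
    (hEh2 : ∀ k i, μ[fun ω => h k i ω ^ 2 | 𝓕 k] =ᵐ[μ] fun _ => σ_h2)
    (hEn : ∀ k, μ[n k | 𝓕 k] =ᵐ[μ] fun _ => 0) (hVn : ∀ k, ∫ ω, ‖n k ω‖ ^ 2 ∂μ ≤ σbar2)
    (hEX : ∀ k i j, μ[X k i j | 𝓕 k] =ᵐ[μ] fun ω => ∇ J (θ k ω))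
    (hVX : ∀ k i j, ∀ᵐ ω ∂μ, μ[fun ω' => ‖X k i j ω'‖ ^ 2 | 𝓕 k] ω ≤ C) (k : ℕ) :
    ∫ ω, J (θ (k + 1) ω) ∂μ - ∫ ω, J (θ k ω) ∂μ ≤
      α * ((M - 1) * σ_h2 - M * (N + 1) * m_h ^ 2) / (2 * M * N * m_h) *
          ∫ ω, ‖∇ J (θ k ω)‖ ^ 2 ∂μ +
        α * σbar2 / (2 * m_h * N ^ 2) + α * σ_h2 * C / (2 * M * N * m_h) := by
  let i : Fin N := ⟨0, hN⟩
  let j : Fin M := ⟨0, hM⟩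
  have hround (k : ℕ) := isOverTheAirRound_condExpKernel_ae (𝓕.le k) (hind k) (hh2 k) (hX2 k)
    (hn2 k) (hEh k) (hEh2 k) (hEX k) (hVX k) (hEn k)
  have hgm (k : ℕ) : AEStronglyMeasurable[𝓕 k] (fun ω => ∇ J (θ k ω)) μ :=
    stronglyMeasurable_condExp.aestronglyMeasurable.congr (hEX k i j)
  have hg (k : ℕ) : MemLp (fun ω => ∇ J (θ k ω)) 2 μ :=
    (memLp_congr_ae (hEX k i j)).1 ((hX2 k i j).condExp one_le_two)
  have hv (k : ℕ) : AEStronglyMeasurable (receivedSignal (h k) (X k) (n k)) μ :=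
    aestronglyMeasurable_receivedSignal (fun i => (hh2 k i).1) (fun i j => (hX2 k i j).1) (hn2 k).1
  have hθJ (k : ℕ) : AEStronglyMeasurable (θ k) μ ∧ Integrable (fun ω => J (θ k ω)) μ := by
    induction k with
    | zero => exact ⟨hθ0, hJ0⟩
    | succ k ih =>
      rw [hθ]
      exact ⟨ih.1.sub ((hv k).const_smul _), integrable_comp_sub_smul hJ hLip ih.1 ih.2 (hg k)
        (memLp_receivedSignal_and_integral_norm_sq_le (𝓕.le k) hM (hround k) (hv k) (hn2 k)
          (hg k)).1 _⟩
  rw [hθ]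
  refine (integral_comp_sub_smul_receivedSignal_sub_le (𝓕.le k) hN hM hm hα hαL hJ hLip
    (hround k) (hv k) (hn2 k) (hθJ k).1 (hθJ k).2 (hgm k) (hg k)).trans ?_
  gcongr
  exact hVn k

/-- one-step expected descent of over-the-air federated policy gradient.
In the over-the-air federated PG model, if `0 < α ≤ 1/(m_h L)`, then for every `k ≥ 0`,
`E[J(θ^{k+1})] - E[J(θ^k)] ≤ (α((M-1)σ_h² - M(N+1)m_h²)/(2 M N m_h)) E[‖∇J(θ^k)‖²]
  + α σ̄²/(2 m_h N²) + α σ_h² V²/(2 M N m_h)`. -/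
theorem overTheAir_one_step_descent
    {d : ℕ} (hd : 1 ≤ d) {N M : ℕ} (hN : 0 < N) (hM : 0 < M)
    {Ω : Type*} [mΩ : MeasurableSpace Ω] [StandardBorelSpace Ω] [Nonempty Ω]
    (μ : Measure Ω) [IsProbabilityMeasure μ]
    (m_h σ_h2 V σbar2 α L : ℝ)
    (hm : 0 < m_h) (hσh : 0 ≤ σ_h2) (hV : 0 ≤ V) (hσbar : 0 ≤ σbar2)
    (hL : 0 < L) (hα : 0 < α) (hαL : α ≤ 1 / (m_h * L))
    (J : EuclideanSpace ℝ (Fin d) → ℝ) (hJ : Differentiable ℝ J)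
    (hLip : ∀ x y : EuclideanSpace ℝ (Fin d),
      ‖gradient J x - gradient J y‖ ≤ L * ‖x - y‖)
    (Jstar : ℝ) (hJstar : IsGLB (Set.range J) Jstar)
    (𝓕 : Filtration ℕ mΩ)
    (h : ℕ → Fin N → Ω → ℝ)
    (X : ℕ → Fin N → Fin M → Ω → EuclideanSpace ℝ (Fin d))
    (n : ℕ → Ω → EuclideanSpace ℝ (Fin d))
    (θ : ℕ → Ω → EuclideanSpace ℝ (Fin d))
    (θ0 : EuclideanSpace ℝ (Fin d)) (hθ0 : θ 0 = fun _ => θ0)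
    (v : ℕ → Ω → EuclideanSpace ℝ (Fin d))
    (hv : ∀ k, v k = fun ω =>
      (∑ i : Fin N, h k i ω • ((1 / (M : ℝ)) • ∑ m : Fin M, X k i m ω)) + n k ω)
    (hθ : ∀ k, θ (k + 1) = fun ω => θ k ω - (α / (N : ℝ)) • v k ω)
    (hθmeas : ∀ k, Measurable[𝓕 k] (θ k))
    (hh2 : ∀ k i, MemLp (h k i) 2 μ)
    (hX2 : ∀ k i m, MemLp (X k i m) 2 μ)
    (hn2 : ∀ k, MemLp (n k) 2 μ)
    (hcondind : ∀ k, iCondIndepFun (𝓕 k) (𝓕.le k)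
      (otaFam (h k) (X k) (n k)) μ)
    (hhind : ∀ k i, Indep (MeasurableSpace.comap (h k i) inferInstance) (𝓕 k) μ)
    (hnind : ∀ k, Indep (MeasurableSpace.comap (n k) inferInstance) (𝓕 k) μ)
    (hEh : ∀ k i, ∫ ω, h k i ω ∂μ = m_h)
    (hEh2 : ∀ k i, ∫ ω, (h k i ω) ^ 2 ∂μ = σ_h2)
    (hEn : ∀ k, ∫ ω, n k ω ∂μ = 0)
    (hVn : ∀ k, ∫ ω, ‖n k ω‖ ^ 2 ∂μ ≤ σbar2)
    (hEX : ∀ k i m, μ[X k i m | 𝓕 k] =ᵐ[μ] fun ω => gradient J (θ k ω))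
    (hVX : ∀ k i m, ∀ᵐ ω ∂μ, (μ[fun ω' => ‖X k i m ω'‖ ^ 2 | 𝓕 k]) ω ≤ V ^ 2) :
    ∀ k : ℕ,
      (∫ ω, J (θ (k + 1) ω) ∂μ) - ∫ ω, J (θ k ω) ∂μ ≤
        (α * (((M : ℝ) - 1) * σ_h2 - (M : ℝ) * ((N : ℝ) + 1) * m_h ^ 2)
            / (2 * (M : ℝ) * (N : ℝ) * m_h)) * ∫ ω, ‖gradient J (θ k ω)‖ ^ 2 ∂μ
          + α * σbar2 / (2 * m_h * (N : ℝ) ^ 2)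
          + α * σ_h2 * V ^ 2 / (2 * (M : ℝ) * (N : ℝ) * m_h) := by
  have hθ' (k : ℕ) : θ (k + 1) =
      fun ω => θ k ω - (α / N) • receivedSignal (h k) (X k) (n k) ω := by rw [hθ, hv]; rfl
  exact overTheAir_one_step_descent_general hN hM μ hm hα.le
    ((le_div_iff₀ (by positivity)).1 hαL) hJ hLip 𝓕 (by simp [hθ0, aestronglyMeasurable_const])
    (by simp [hθ0]) hθ' hh2 hX2 hn2 hcondind
    (fun k i => condExp_comp_ae_eq_const_of_indep (𝓕.le k) (hh2 k i).1.aemeasurable (hhind k i)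
      stronglyMeasurable_id (hEh k i))
    (fun k i => condExp_comp_ae_eq_const_of_indep (𝓕.le k) (hh2 k i).1.aemeasurable (hhind k i)
      (stronglyMeasurable_id.pow 2) (hEh2 k i))
    (fun k => condExp_comp_ae_eq_const_of_indep (𝓕.le k) (hn2 k).1.aemeasurable (hnind k)
      stronglyMeasurable_id (hEn k)) hVn hEX hVX
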